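/- Let I = (a, b) be an open real interval, let y : ℝ → ℝ be continuous on I, let g : ℝ → ℝ be locally integrable on I, and let α > 0. Assume that (1/2) y' + (α/2) y + g ≤ 0 holds in the sense of distributions on I, i.e. for every nonnegative smooth compactly supported function φ : ℝ → ℝ with support contained in I one has ∫ (−(1/2) y(t) φ'(t) + (α/2) y(t) φ(t) + g(t) φ(t)) dt ≤ 0. Then for all s, t ∈ I with s ≤ t, y(t) ≤ y(s) e^{−α(t−s)} − 2 ∫_s^t e^{−α(t−r)} g(r) dr. -/

import Mathlib

open MeasureTheory Set Real

/-! With `w r = exp (-α (t - r))`, the hypothesis says `(w y)' ≤ -2 w g` in the sense of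
distributions, because multiplying test functions by a nonnegative smooth `w` preserves such
inequalities and obeys the product rule. A distributional inequality `Y' ≤ F` is then integrated
over `[s, t]` by testing it against the indicator of `(s, t]` mollified by a bump function `ρ`: the
derivative of this test function is `ρ (s - ·) - ρ (t - ·)`, so the left-hand side becomes the
difference of the mollified values of `Y` at `t` and `s`, and shrinking `ρ` gives
`Y t - Y s ≤ ∫ r in s..t, F r`. -/

open Filter Metric Topology
open scoped ContDiff Convolution

lemma locallyIntegrable_indicator_one {X : Type*} [TopologicalSpace X] [MeasurableSpace X]
    {μ : Measure X} [IsLocallyFiniteMeasure μ] {S : Set X} (hS : MeasurableSet S) :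
    LocallyIntegrable (S.indicator (1 : X → ℝ)) μ :=
  (locallyIntegrable_const 1).indicator hS

section MollifiedIndicator

variable {G : Type*} [NormedAddCommGroup G] [NormedSpace ℝ G] [FiniteDimensional ℝ G]
  [MeasurableSpace G]

/-- The mollification of the indicator function of `S` by the normalized bump function `ρ`,
a smooth substitute for the indicator function as a test function. -/
noncomputable def mollifiedIndicator (ρ : ContDiffBump (0 : G)) (μ : Measure G) (S : Set G) :
    G → ℝ :=
  ρ.normed μ ⋆[ContinuousLinearMap.lsmul ℝ ℝ, μ] S.indicator 1

variable {μ : Measure G} {S : Set G} (ρ : ContDiffBump (0 : G))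

lemma mollifiedIndicator_nonneg (x : G) : 0 ≤ mollifiedIndicator ρ μ S x :=
  integral_nonneg fun u ↦
    mul_nonneg (ρ.nonneg_normed u) (indicator_nonneg (fun _ _ ↦ zero_le_one) (x - u))

variable [BorelSpace G] [μ.IsAddHaarMeasure]

lemma contDiff_mollifiedIndicator (hS : MeasurableSet S) :
    ContDiff ℝ ∞ (mollifiedIndicator ρ μ S) :=
  ρ.hasCompactSupport_normed.contDiff_convolution_left _ ρ.contDiff_normed
    (locallyIntegrable_indicator_one hS)

lemma mollifiedIndicator_le_one (hS : MeasurableSet S) (x : G) :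
    mollifiedIndicator ρ μ S x ≤ 1 := by
  have hexists {f : G → ℝ} (hf : LocallyIntegrable f μ) :
      ConvolutionExistsAt (ρ.normed μ) f x (ContinuousLinearMap.lsmul ℝ ℝ) μ :=
    ρ.hasCompactSupport_normed.convolutionExists_left _ ρ.continuous_normed hf x
  calc mollifiedIndicator ρ μ S x
      ≤ (ρ.normed μ ⋆[ContinuousLinearMap.lsmul ℝ ℝ, μ] (1 : G → ℝ)) x :=
        convolution_mono_right (hexists (locallyIntegrable_indicator_one hS))
          (hexists (locallyIntegrable_const 1)) ρ.nonneg_normed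
          (indicator_le_self' fun _ _ ↦ zero_le_one)
    _ = 1 := ρ.normed_convolution_eq_right fun _ _ ↦ rfl

lemma support_mollifiedIndicator_subset :
    Function.support (mollifiedIndicator ρ μ S) ⊆ thickening ρ.rOut S := by
  refine (support_convolution_subset _).trans ?_
  rw [ρ.support_normed_eq, ← ball_add_zero]
  exact add_subset_add_left support_indicator_subset

lemma tsupport_mollifiedIndicator_subset :
    tsupport (mollifiedIndicator ρ μ S) ⊆ cthickening ρ.rOut S :=
  (closure_mono (support_mollifiedIndicator_subset ρ)).trans
    (closure_thickening_subset_cthickening _ _)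

variable {ι : Type*} {l : Filter ι} {ρ : ι → ContDiffBump (0 : G)}

lemma tendsto_normed_convolution {E : Type*} [NormedAddCommGroup E] [NormedSpace ℝ E]
    [CompleteSpace E] (hρ : Tendsto (fun i ↦ (ρ i).rOut) l (𝓝 0)) {f : G → E}
    (hf : AEStronglyMeasurable f μ) {x : G} (hx : ContinuousAt f x) :
    Tendsto (fun i ↦ ((ρ i).normed μ ⋆[ContinuousLinearMap.lsmul ℝ ℝ, μ] f) x) l (𝓝 (f x)) :=
  ContDiffBump.convolution_tendsto_right hρ (.of_forall fun _ ↦ hf) (hx.tendsto.comp tendsto_snd)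
    tendsto_const_nhds

lemma tendsto_mollifiedIndicator (hρ : Tendsto (fun i ↦ (ρ i).rOut) l (𝓝 0))
    (hS : MeasurableSet S) {x : G} (hx : x ∉ frontier S) :
    Tendsto (fun i ↦ mollifiedIndicator (ρ i) μ S x) l (𝓝 (S.indicator 1 x)) :=
  tendsto_normed_convolution hρ (locallyIntegrable_indicator_one hS).aestronglyMeasurable
    (continuousOn_const.continuousAt_indicator hx)

lemma tendsto_integral_mollifiedIndicator_smul {E : Type*} [NormedAddCommGroup E] [NormedSpace ℝ E]
    [l.IsCountablyGenerated] (hρ : Tendsto (fun i ↦ (ρ i).rOut) l (𝓝 0))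
    (hS : MeasurableSet S) (hfrontier : μ (frontier S) = 0) {f : G → E} (hf : Integrable f μ) :
    Tendsto (fun i ↦ ∫ x, mollifiedIndicator (ρ i) μ S x • f x ∂μ) l (𝓝 (∫ x in S, f x ∂μ)) := by
  rw [← integral_indicator hS]
  refine tendsto_integral_filter_of_dominated_convergence (fun x ↦ ‖f x‖)
    (.of_forall fun i ↦ ?_) (.of_forall fun i ↦ .of_forall fun x ↦ ?_) hf.norm ?_
  · exact (contDiff_mollifiedIndicator (ρ i) hS).continuous.aestronglyMeasurable.smul
      hf.aestronglyMeasurable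
  · rw [norm_smul, norm_of_nonneg (mollifiedIndicator_nonneg _ x)]
    exact mul_le_of_le_one_left (norm_nonneg _) (mollifiedIndicator_le_one _ hS x)
  · filter_upwards [measure_eq_zero_iff_ae_notMem.1 hfrontier] with x hx
    have hfx : S.indicator f x = S.indicator (1 : G → ℝ) x • f x := by
      simp only [← indicator_smul_apply_left, Pi.one_apply, one_smul]
    exact hfx ▸ (tendsto_mollifiedIndicator hρ hS hx).smul_const (f x)

end MollifiedIndicator

lemma hasDerivAt_mollifiedIndicator_Ioc (ρ : ContDiffBump (0 : ℝ)) {s t : ℝ} (hst : s ≤ t)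
    (x : ℝ) :
    HasDerivAt (mollifiedIndicator ρ volume (Ioc s t))
      (ρ.normed volume (s - x) - ρ.normed volume (t - x)) x := by
  have hρ : ContDiff ℝ 1 (ρ.normed volume) := ρ.contDiff_normed
  have hderiv : (deriv (ρ.normed volume) ⋆[ContinuousLinearMap.lsmul ℝ ℝ]
      (Ioc s t).indicator (1 : ℝ → ℝ)) x = ρ.normed volume (s - x) - ρ.normed volume (t - x) :=
    calc _ = ∫ u in s..t, deriv (ρ.normed volume) (x - u) := by
          rw [convolution_lsmul_swap, intervalIntegral.integral_of_le hst,
            ← integral_indicator measurableSet_Ioc]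
          simp only [indicator_apply, Pi.one_apply, smul_eq_mul, mul_ite, mul_one, mul_zero]
      _ = ∫ u in (x - t)..(x - s), deriv (ρ.normed volume) u :=
          intervalIntegral.integral_comp_sub_left _ x
      _ = ρ.normed volume (x - s) - ρ.normed volume (x - t) :=
          intervalIntegral.integral_deriv_eq_sub (fun u _ ↦ hρ.differentiable one_ne_zero u)
            ((hρ.continuous_deriv le_rfl).intervalIntegrable _ _)
      _ = _ := by rw [← ρ.normed_neg (x - s), ← ρ.normed_neg (x - t), neg_sub, neg_sub]
  exact hderiv ▸ ρ.hasCompactSupport_normed.hasDerivAt_convolution_left _ hρ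
    (locallyIntegrable_indicator_one measurableSet_Ioc) x

/-- `DistribDerivLE Y F U` says that `Y' ≤ F` holds on `U` in the sense of distributions. It is
meaningful for `Y` and `F` locally integrable on `U`; otherwise the integral may be the junk
value `0`. -/
def DistribDerivLE (Y F : ℝ → ℝ) (U : Set ℝ) : Prop :=
  ∀ φ : ℝ → ℝ, ContDiff ℝ ∞ φ → HasCompactSupport φ → (∀ x, 0 ≤ φ x) → tsupport φ ⊆ U →
    ∫ x, (-(Y x * deriv φ x) - F x * φ x) ≤ 0

namespace DistribDerivLE

variable {Y F f w : ℝ → ℝ} {U V : Set ℝ} {s t κ : ℝ}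

lemma mono (h : DistribDerivLE Y F U) (hVU : V ⊆ U) : DistribDerivLE Y F V :=
  fun φ hφ hφc hφ0 hφV ↦ h φ hφ hφc hφ0 (hφV.trans hVU)

lemma indicator (h : DistribDerivLE Y F U) :
    DistribDerivLE (U.indicator Y) (U.indicator F) U := by
  intro φ hφ hφc hφ0 hφU
  convert h φ hφ hφc hφ0 hφU using 3 with x
  by_cases hx : x ∈ U
  · simp only [indicator_of_mem hx]
  · have hxφ : x ∉ tsupport φ := fun h ↦ hx (hφU h)
    rw [image_eq_zero_of_notMem_tsupport hxφ,
      Function.notMem_support.1 fun h ↦ hxφ (support_deriv_subset h)]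
    simp only [mul_zero]

lemma smooth_mul (h : DistribDerivLE Y F U) (hw : ContDiff ℝ ∞ w) (hw0 : ∀ x, 0 ≤ w x) :
    DistribDerivLE (fun x ↦ w x * Y x) (fun x ↦ deriv w x * Y x + w x * F x) U := by
  intro φ hφ hφc hφ0 hφU
  convert h (fun x ↦ w x * φ x) (hw.mul hφ) hφc.mul_left (fun x ↦ mul_nonneg (hw0 x) (hφ0 x))
    ((tsupport_mul_subset_right (f := w)).trans hφU) using 3 with x
  rw [deriv_fun_mul (hw.differentiable (by simp) x) (hφ.differentiable (by simp) x)]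
  ring

lemma normed_convolution_sub_le (h : DistribDerivLE Y F U) (hY : LocallyIntegrable Y)
    (hF : LocallyIntegrable F) (hst : s ≤ t) (ρ : ContDiffBump (0 : ℝ))
    (hρ : cthickening ρ.rOut (Icc s t) ⊆ U) :
    (ρ.normed volume ⋆[ContinuousLinearMap.lsmul ℝ ℝ] Y) t
      - (ρ.normed volume ⋆[ContinuousLinearMap.lsmul ℝ ℝ] Y) s
      ≤ ∫ x, mollifiedIndicator ρ volume (Ioc s t) x • F x := by
  set ψ := mollifiedIndicator ρ volume (Ioc s t)
  have hψ : ContDiff ℝ ∞ ψ := contDiff_mollifiedIndicator ρ measurableSet_Ioc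
  have hψsupp : tsupport ψ ⊆ cthickening ρ.rOut (Icc s t) :=
    (tsupport_mollifiedIndicator_subset ρ).trans
      (cthickening_subset_of_subset _ Ioc_subset_Icc_self)
  have hψc : HasCompactSupport ψ :=
    isCompact_Icc.cthickening.of_isClosed_subset (isClosed_tsupport ψ) hψsupp
  have hYint (z : ℝ) : Integrable fun x ↦ ρ.normed volume (z - x) • Y x :=
    (ρ.hasCompactSupport_normed.convolutionExists_left (ContinuousLinearMap.lsmul ℝ ℝ)
      ρ.continuous_normed hY z).integrable_swap
  have hYsub : Integrable fun x ↦
      ρ.normed volume (t - x) • Y x - ρ.normed volume (s - x) • Y x := (hYint t).sub (hYint s)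
  have hFint : Integrable fun x ↦ ψ x • F x :=
    hF.integrable_smul_left_of_hasCompactSupport hψ.continuous hψc
  rw [convolution_lsmul_swap, convolution_lsmul_swap, ← sub_nonpos,
    ← integral_sub (hYint t) (hYint s), ← integral_sub hYsub hFint]
  convert h ψ hψ hψc (mollifiedIndicator_nonneg ρ) (hψsupp.trans hρ) using 3 with x
  rw [(hasDerivAt_mollifiedIndicator_Ioc ρ hst x).deriv]
  simp only [smul_eq_mul]
  ring

lemma sub_le_integral_of_integrable (h : DistribDerivLE Y F U) (hU : U ∈ 𝓝ˢ (Icc s t))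
    (hY : LocallyIntegrable Y) (hF : Integrable F) (hst : s ≤ t) (hYs : ContinuousAt Y s)
    (hYt : ContinuousAt Y t) : Y t - Y s ≤ ∫ x in s..t, F x := by
  obtain ⟨δ, hδ, hδU⟩ := (hasBasis_nhdsSet_cthickening isCompact_Icc).mem_iff.1 hU
  let ρ (n : ℕ) : ContDiffBump (0 : ℝ) :=
    ⟨δ / (n + 1) / 2, δ / (n + 1), by positivity, half_lt_self (by positivity)⟩
  have hρ : Tendsto (fun n ↦ (ρ n).rOut) atTop (𝓝 0) := by
    simpa [ρ, div_eq_mul_inv] using tendsto_one_div_add_atTop_nhds_zero_nat.const_mul δ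
  have hρδ (n : ℕ) : (ρ n).rOut ≤ δ := div_le_self hδ.le (by simp)
  have hfrontier : volume (frontier (Ioc s t)) = 0 := (convex_Ioc s t).addHaar_frontier volume
  rw [intervalIntegral.integral_of_le hst]
  refine le_of_tendsto_of_tendsto'
    ((tendsto_normed_convolution hρ hY.aestronglyMeasurable hYt).sub
      (tendsto_normed_convolution hρ hY.aestronglyMeasurable hYs))
    (tendsto_integral_mollifiedIndicator_smul hρ measurableSet_Ioc hfrontier hF) fun n ↦ ?_
  exact h.normed_convolution_sub_le hY hF.locallyIntegrable hst (ρ n)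
    ((cthickening_mono (hρδ n) _).trans hδU)

theorem sub_le_integral (h : DistribDerivLE Y F U) (hU : IsOpen U) (hsub : Icc s t ⊆ U)
    (hY : LocallyIntegrableOn Y U) (hF : LocallyIntegrableOn F U) (hst : s ≤ t)
    (hYs : ContinuousAt Y s) (hYt : ContinuousAt Y t) : Y t - Y s ≤ ∫ x in s..t, F x := by
  obtain ⟨δ, hδ, hδU⟩ := isCompact_Icc.exists_cthickening_subset_open hU hsub
  set K := cthickening δ (Icc s t)
  have hK : IsCompact K := isCompact_Icc.cthickening
  have hKnhds : K ∈ 𝓝ˢ (Icc s t) := cthickening_mem_nhdsSet _ hδ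
  have hIccK : Icc s t ⊆ K := self_subset_cthickening _
  have hindicator {H : ℝ → ℝ} (hH : LocallyIntegrableOn H U) : Integrable (K.indicator H) :=
    (hH.integrableOn_compact_subset hδU hK).integrable_indicator hK.measurableSet
  have hcont {z : ℝ} (hz : z ∈ Icc s t) (hYz : ContinuousAt Y z) :
      ContinuousAt (K.indicator Y) z :=
    hYz.congr (eqOn_indicator.symm.eventuallyEq_of_mem (mem_nhdsSet_iff_forall.1 hKnhds z hz))
  have hs : s ∈ Icc s t := left_mem_Icc.2 hst
  have ht : t ∈ Icc s t := right_mem_Icc.2 hst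
  calc Y t - Y s = K.indicator Y t - K.indicator Y s := by
        rw [indicator_of_mem (hIccK ht), indicator_of_mem (hIccK hs)]
    _ ≤ ∫ x in s..t, K.indicator F x :=
        (h.mono hδU).indicator.sub_le_integral_of_integrable hKnhds
          (hindicator hY).locallyIntegrable (hindicator hF) hst (hcont hs hYs) (hcont ht hYt)
    _ = ∫ x in s..t, F x :=
        intervalIntegral.integral_congr fun x hx ↦
          indicator_of_mem (hIccK (uIcc_of_le hst ▸ hx)) F

theorem le_exp_mul_add_integral (h : DistribDerivLE Y (fun x ↦ κ * Y x + f x) U) (hU : IsOpen U)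
    (hsub : Icc s t ⊆ U) (hY : LocallyIntegrableOn Y U) (hf : LocallyIntegrableOn f U)
    (hst : s ≤ t) (hYs : ContinuousAt Y s) (hYt : ContinuousAt Y t) :
    Y t ≤ exp (κ * (t - s)) * Y s + ∫ r in s..t, exp (κ * (t - r)) * f r := by
  set w : ℝ → ℝ := fun r ↦ exp (κ * (t - r)) with hw
  have hwsmooth : ContDiff ℝ ∞ w := by fun_prop
  have hwderiv (r : ℝ) : deriv w r = -κ * w r := by
    rw [hw, (((hasDerivAt_id' r).const_sub t).const_mul κ).exp.deriv]
    ring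
  have hwY : DistribDerivLE (fun r ↦ w r * Y r) (fun r ↦ w r * f r) U := by
    convert h.smooth_mul hwsmooth (fun r ↦ (exp_pos _).le) using 2 with r
    rw [hwderiv]
    ring
  have hint {H : ℝ → ℝ} (hH : LocallyIntegrableOn H U) :
      LocallyIntegrableOn (fun r ↦ w r * H r) U :=
    hH.continuousOn_mul hwsmooth.continuous.continuousOn hU.isLocallyClosed
  have hwt : w t = 1 := by simp [hw]
  have hincrement : w t * Y t - w s * Y s ≤ ∫ r in s..t, w r * f r :=
    hwY.sub_le_integral hU hsub (hint hY) (hint hf) hst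
      (hwsmooth.continuous.continuousAt.mul hYs) (hwsmooth.continuous.continuousAt.mul hYt)
  rw [hwt, one_mul] at hincrement
  linarith

end DistribDerivLE

theorem weighted_energy_inequality_general {U : Set ℝ} (hU : IsOpen U) {y g : ℝ → ℝ} {α s t : ℝ}
    (hy : LocallyIntegrableOn y U) (hgloc : LocallyIntegrableOn g U)
    (hineq : ∀ φ : ℝ → ℝ, ContDiff ℝ ∞ φ → HasCompactSupport φ → (∀ t, 0 ≤ φ t) → tsupport φ ⊆ U →
      ∫ t, (-(1/2) * y t * deriv φ t + (α/2) * y t * φ t + g t * φ t) ≤ 0)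
    (hst : s ≤ t) (hsub : Icc s t ⊆ U) (hys : ContinuousAt y s) (hyt : ContinuousAt y t) :
    y t ≤ y s * exp (-(α * (t - s))) - 2 * ∫ r in s..t, exp (-(α * (t - r))) * g r := by
  have hderiv : DistribDerivLE y (fun r ↦ -α * y r + -2 * g r) U := by
    intro φ hφ hφc hφ0 hφU
    calc _ = 2 * ∫ t, (-(1/2) * y t * deriv φ t + (α/2) * y t * φ t + g t * φ t) := by
          rw [← integral_const_mul]
          congr 1 with r
          ring
      _ ≤ 0 := by linarith [hineq φ hφ hφc hφ0 hφU]
  have hbound := hderiv.le_exp_mul_add_integral hU hsub hy (hgloc.smul (-2 : ℝ)) hst hys hyt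
  simp only [mul_left_comm _ (-2 : ℝ), intervalIntegral.integral_const_mul, neg_mul α] at hbound
  linarith

/-- Exponentially weighted integral inequality from
`(1/2) y' + (α/2) y + g ≤ 0` in the sense of distributions on `(a, b)`. -/
theorem weighted_energy_inequality
    (a b : ℝ) (y g : ℝ → ℝ) (α : ℝ)
    (hy : ContinuousOn y (Ioo a b))
    (hgloc : LocallyIntegrableOn g (Ioo a b))
    (hα : 0 < α)
    (hineq : ∀ φ : ℝ → ℝ, ContDiff ℝ (⊤ : ℕ∞) φ → HasCompactSupport φ →
      (∀ t, 0 ≤ φ t) → tsupport φ ⊆ Ioo a b →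
      ∫ t, (-(1/2) * y t * deriv φ t + (α/2) * y t * φ t + g t * φ t) ≤ 0) :
    ∀ s ∈ Ioo a b, ∀ t ∈ Ioo a b, s ≤ t →
      y t ≤ y s * Real.exp (-(α * (t - s)))
        - 2 * ∫ r in s..t, Real.exp (-(α * (t - r))) * g r :=
  fun _ hs _ ht hst ↦
    weighted_energy_inequality_general isOpen_Ioo (hy.locallyIntegrableOn measurableSet_Ioo) hgloc
      hineq hst (ordConnected_Ioo.out hs ht) (hy.continuousAt (isOpen_Ioo.mem_nhds hs))
      (hy.continuousAt (isOpen_Ioo.mem_nhds ht))
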